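/- Let q be a power of 3 and let m > 1 be an integer. Then the sum of |𝓘(x^3, h, m, q)| over all polynomials h(x) ∈ F_q[x] of degree at most 2 with h(0) = 1 equals ((q−1)/(3m)) ∑_{d ∣ m, 3 ∤ d} μ(d) (q + (3 + (−1)^{m/d})/2) q^{m/d}, where μ is the Möbius function. -/

import Mathlib

open Polynomial

/-- The transform `f_R` of a nonzero polynomial `f` by the rational expression `R = g/h`. -/
noncomputable def ratTransform {K : Type*} [Field K] (g h f : K[X]) : K[X] :=
  ∑ i ∈ Finset.range (f.natDegree + 1), C (f.coeff i) * g ^ i * h ^ (f.natDegree - i)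

/-- `𝓘(g,h,n,q)`: the set of monic irreducible polynomials `f` of degree `n` over the field
such that `f_R` is irreducible. -/
noncomputable def IrredSet {K : Type*} [Field K] (g h : K[X]) (n : ℕ) : Set K[X] :=
  {f | f.Monic ∧ Irreducible f ∧ f.natDegree = n ∧ Irreducible (ratTransform g h f)}

/-- `I(n,q) = (1/n) ∑_{d ∣ n} μ(d) q^{n/d}`, used formally for any rational `q`. -/
noncomputable def Ifun (n : ℕ) (q : ℚ) : ℚ :=
  (1 / (n : ℚ)) * ∑ d ∈ n.divisors, ((ArithmeticFunction.moebius d : ℤ) : ℚ) * q ^ (n / d)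

/-- `I(n/m, q)` with the convention that it is `0` when `m` does not divide `n`
(i.e. when `n/m` is not a positive integer). -/
noncomputable def IfunD (n m : ℕ) (q : ℚ) : ℚ := if m ∣ n then Ifun (n / m) q else 0

/-- `n₃`: the largest power of `3` dividing `n`. -/
def nThree (n : ℕ) : ℕ := 3 ^ (n.factorization 3)

/-!
Write `R = x³/h` with `h = 1 + ax + bx²` and let `K` be the extension of `F` of degree `m`. The
`f` in question are the minimal polynomials of the generators `α` of `K`, and `f_R` is irreducible
iff `x³ - αh(x)` is irreducible over `K`; putting `x = 1/y`, this says that the map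
`P(y) = y³ + ay² + by` omits the value `1/α` on `K`.

Möbius inversion over the subfields of `K` reduces the count to the values omitted on a subfield
`L` of degree `e = m/d`: a value in `L` is omitted on `K` iff it is omitted on `L` and `3 ∤ d`.
The fibres of `P` have at most three points, so the number of omitted values is determined by the
number of pairs `x ≠ y` with `P(x) = P(y)` and the number of two-point fibres. In characteristic
`3`, `P(x) - P(y) = (x - y)((x - y)² + a(x + y) + b)`, whence three times the number of omitted
values is `q^e` if `a ≠ 0` and `q^e · #{t ≠ 0 | t² = -b}` if `a = 0`. Summed over `b ∈ F`, the last
factor counts the `t ∈ Lˣ` with `t² ∈ F`, of which there are `(q - 1) gcd(2, e)`.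
-/

open IntermediateField Module

section Counting

open ArithmeticFunction in
theorem ncard_eq_sum_moebius_mul_ncard_dvd {α : Type*} [Finite α] (S : Set α) (deg : α → ℕ)
    {m : ℕ} (hm : m ≠ 0) :
    ({x ∈ S | deg x = m}.ncard : ℤ) =
      ∑ d ∈ m.divisors, moebius d * ({x ∈ S | deg x ∣ m / d}.ncard : ℤ) := by
  classical
  have := Fintype.ofFinite α
  have hsum : ∀ n > 0, ∑ e ∈ n.divisors, ({x ∈ S | deg x = e}.ncard : ℤ) =
      ({x ∈ S | deg x ∣ n}.ncard : ℤ) := fun n hn => by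
    simp only [Set.ncard_eq_toFinset_card', Set.toFinset_ofPred]
    rw [Finset.card_eq_sum_card_fiberwise (f := deg) (t := n.divisors)
      (fun x hx => by simpa [hn.ne'] using (Finset.mem_filter.mp hx).2.2)]
    push_cast
    refine Finset.sum_congr rfl fun e he => ?_
    rw [Finset.filter_filter]
    congr 2
    ext x
    have := Nat.dvd_of_mem_divisors he
    aesop
  have hinv := sum_eq_iff_sum_smul_moebius_eq.mp hsum m (Nat.pos_of_ne_zero hm)
  rw [← hinv]
  exact Nat.sum_divisorsAntidiagonal fun d e => moebius d * ({x ∈ S | deg x ∣ e}.ncard : ℤ)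

theorem ncard_preimage_of_ncard_fiber_eq {α β : Type*} [Finite α] {φ : α → β} {S : Set β} {n : ℕ}
    (hφ : ∀ s ∈ S, (φ ⁻¹' {s}).ncard = n) : (φ ⁻¹' S).ncard = S.ncard * n := by
  have e (s : S) : {x // φ x = s} ≃ Fin n := Finite.equivFinOfCardEq (hφ s s.2)
  calc (φ ⁻¹' S).ncard = Nat.card ((s : S) × {x // φ x = s}) :=
        (Nat.card_congr (Equiv.sigmaSubtypeFiberEquivSubtype φ fun _ => .rfl)).symm
    _ = Nat.card (S × Fin n) :=
        Nat.card_congr ((Equiv.sigmaCongrRight e).trans (Equiv.sigmaEquivProd S (Fin n)))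
    _ = S.ncard * n := by rw [Nat.card_prod, Nat.card_coe_set_eq, Nat.card_fin]

theorem sum_ncard_preimage_singleton {α β : Type*} [Finite α] [Fintype β] (f : α → β) :
    ∑ y, (f ⁻¹' {y}).ncard = Nat.card α := by
  classical
  have := Fintype.ofFinite α
  rw [Nat.card_eq_fintype_card, ← Finset.card_univ, Finset.card_eq_sum_card_fiberwise (f := f)
    (t := Finset.univ) (fun _ _ => Finset.mem_coe.mpr (Finset.mem_univ _))]
  refine Finset.sum_congr rfl fun y _ => ?_
  rw [Set.ncard_eq_toFinset_card']
  congr 1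
  ext x
  simp

theorem ncard_setOf_ne_and_apply_eq {α β : Type*} [Finite α] [Fintype β] (f : α → β) :
    {p : α × α | p.1 ≠ p.2 ∧ f p.1 = f p.2}.ncard =
      ∑ y, (f ⁻¹' {y}).ncard * ((f ⁻¹' {y}).ncard - 1) := by
  classical
  have := Fintype.ofFinite α
  rw [Set.ncard_eq_toFinset_card', Finset.card_eq_sum_card_fiberwise (f := fun p => f p.1)
    (t := Finset.univ) (fun _ _ => Finset.mem_coe.mpr (Finset.mem_univ _))]
  refine Finset.sum_congr rfl fun y _ => ?_
  rw [Set.ncard_eq_toFinset_card', Nat.mul_sub_one, ← Finset.offDiag_card]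
  congr 1
  ext p
  simp only [Finset.mem_filter, Set.mem_toFinset, Set.mem_ofPred_eq, Finset.mem_offDiag,
    Set.mem_preimage, Set.mem_singleton_iff]
  grind

theorem three_mul_ncard_compl_range_of_ncard_fiber_le {α : Type*} [Finite α] (f : α → α)
    (hf : ∀ y, (f ⁻¹' {y}).ncard ≤ 3) :
    3 * (Set.range f)ᶜ.ncard =
      {p : α × α | p.1 ≠ p.2 ∧ f p.1 = f p.2}.ncard + {y | (f ⁻¹' {y}).ncard = 2}.ncard := by
  classical
  have := Fintype.ofFinite α
  let N (y : α) : ℕ := (f ⁻¹' {y}).ncard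
  have hcard (n : ℕ) : {y | N y = n}.ncard = ∑ y, if N y = n then 1 else 0 := by
    simp [Set.ncard_eq_toFinset_card']
  have hcompl : (Set.range f)ᶜ = {y | N y = 0} := by
    ext y
    rw [Set.mem_ofPred_eq, Set.ncard_eq_zero, Set.preimage_singleton_eq_empty, Set.mem_compl_iff]
  have htotal : ∑ y, N y = ∑ _y : α, 1 := by
    simpa using sum_ncard_preimage_singleton f
  have hpoint (y : α) : 3 * (if N y = 0 then 1 else 0) + 3 * N y =
      N y * (N y - 1) + (if N y = 2 then 1 else 0) + 3 * 1 := by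
    have : N y ≤ 3 := hf y
    interval_cases N y <;> rfl
  have hsum := Finset.sum_congr (rfl : (Finset.univ : Finset α) = _) fun y _ => hpoint y
  simp only [Finset.sum_add_distrib, ← Finset.mul_sum, htotal] at hsum
  rw [hcompl, hcard, hcard, ncard_setOf_ne_and_apply_eq]
  exact Nat.add_right_cancel hsum

end Counting

section RatTransform

variable {F K E : Type*} [Field F] [Field K] [Field E] [Algebra F K] [Algebra F E] [Algebra K E]
  [IsScalarTower F K E] {g h : F[X]}

theorem natDegree_ratTransform (hgh : h.natDegree < g.natDegree) (f : F[X]) :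
    (ratTransform g h f).natDegree = f.natDegree * g.natDegree := by
  rcases eq_or_ne f 0 with rfl | hf
  · simp [ratTransform]
  have hg : g ≠ 0 := ne_zero_of_natDegree_gt hgh
  have htop : (C f.leadingCoeff * g ^ f.natDegree).natDegree = f.natDegree * g.natDegree := by
    rw [natDegree_C_mul (leadingCoeff_ne_zero.mpr hf), natDegree_pow]
  have hlower : (∑ i ∈ Finset.range f.natDegree,
      C (f.coeff i) * g ^ i * h ^ (f.natDegree - i)).degree <
        (C f.leadingCoeff * g ^ f.natDegree).degree := by
    rw [degree_eq_natDegree (p := C f.leadingCoeff * g ^ f.natDegree) (by simp [hf, hg]), htop]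
    refine (degree_sum_le _ _).trans_lt ((Finset.sup_lt_iff (WithBot.bot_lt_coe _)).mpr ?_)
    intro i hi
    rw [Finset.mem_range] at hi
    refine degree_le_natDegree.trans_lt (Nat.cast_lt.mpr ?_)
    calc (C (f.coeff i) * g ^ i * h ^ (f.natDegree - i)).natDegree
        ≤ i * g.natDegree + (f.natDegree - i) * h.natDegree :=
          natDegree_mul_le_of_le ((natDegree_C_mul_le _ _).trans natDegree_pow_le) natDegree_pow_le
      _ < i * g.natDegree + (f.natDegree - i) * g.natDegree := by
          gcongr
          omega
      _ = f.natDegree * g.natDegree := by rw [← add_mul, Nat.add_sub_cancel' hi.le]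
  rw [ratTransform, Finset.sum_range_succ, Nat.sub_self, pow_zero, mul_one, coeff_natDegree,
    natDegree_add_eq_right_of_degree_lt hlower, htop]

theorem aeval_ratTransform (f : F[X]) {x α : E} (hx : aeval x g = α * aeval x h) :
    aeval x (ratTransform g h f) = aeval x h ^ f.natDegree * aeval α f := by
  rw [aeval_eq_sum_range (p := f), ratTransform, map_sum, Finset.mul_sum]
  refine Finset.sum_congr rfl fun i hi => ?_
  have hsplit : aeval x h ^ f.natDegree = aeval x h ^ i * aeval x h ^ (f.natDegree - i) := by
    rw [← pow_add, Nat.add_sub_cancel' (Finset.mem_range_succ_iff.mp hi)]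
  simp only [map_mul, map_pow, aeval_C, hx, hsplit, Algebra.smul_def]
  ring

theorem adjoin_simple_eq_top_of_mem {α : K} {x : E} (hα : F⟮α⟯ = ⊤) (hx : K⟮x⟯ = ⊤)
    (hmem : algebraMap K E α ∈ F⟮x⟯) : F⟮x⟯ = ⊤ := by
  have hK (k : K) : algebraMap K E k ∈ F⟮x⟯ := by
    have hle : F⟮α⟯ ≤ F⟮x⟯.comap (IsScalarTower.toAlgHom F K E) :=
      adjoin_simple_le_iff.mpr hmem
    exact hle (hα ▸ mem_top)
  have hle : K⟮x⟯ ≤ F⟮x⟯.toSubfield.toIntermediateField hK :=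
    adjoin_simple_le_iff.mpr (mem_adjoin_simple_self F x)
  exact eq_top_iff.mpr fun y _ => hle (hx ▸ mem_top)

theorem natDegree_minpoly_eq_finrank_mul [FiniteDimensional F K] [FiniteDimensional K E]
    (hco : IsCoprime g h) {α : K} {x : E} (hα : F⟮α⟯ = ⊤) (hx : K⟮x⟯ = ⊤)
    (hroot : aeval x g = algebraMap K E α * aeval x h) :
    (minpoly F x).natDegree = finrank F K * (minpoly K x).natDegree := by
  have : FiniteDimensional F E := .trans F K E
  have hh : aeval x h ≠ 0 := fun hh0 => by
    obtain ⟨u, v, huv⟩ := hco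
    simpa [hroot, hh0] using congrArg (aeval x) huv
  have hmem : algebraMap K E α ∈ F⟮x⟯ := by
    rw [eq_div_of_mul_eq hh hroot.symm]
    exact div_mem (algebra_adjoin_le_adjoin F {x} (aeval_mem_adjoin_singleton F x))
      (algebra_adjoin_le_adjoin F {x} (aeval_mem_adjoin_singleton F x))
  rw [(Field.primitive_element_iff_minpoly_natDegree_eq F x).mp
      (adjoin_simple_eq_top_of_mem hα hx hmem),
    (Field.primitive_element_iff_minpoly_natDegree_eq K x).mp hx, finrank_mul_finrank]

theorem irreducible_iff_natDegree_eq_of_dvd {p P : F[X]} (hp : Irreducible p) (hP : P ≠ 0)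
    (hdvd : p ∣ P) : Irreducible P ↔ p.natDegree = P.natDegree :=
  ⟨fun hPirr => natDegree_eq_of_degree_eq
      (degree_eq_degree_of_associated (hp.associated_of_dvd hPirr hdvd)),
    fun hdeg => (associated_of_dvd_of_natDegree_le hdvd hP hdeg.ge).irreducible hp⟩

/- For a root `x` of an irreducible factor `p` of `g - αh` over `K = F(α)`, the field `F(x)`
contains `α = g(x)/h(x)`, hence equals `K(x)`; so `minpoly F x`, a divisor of `f_R`, has degree
`deg f * deg p`, and each side says that this degree is maximal. -/
theorem irreducible_ratTransform_minpoly_iff [FiniteDimensional F K] (hco : IsCoprime g h)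
    (hgh : h.natDegree < g.natDegree) {α : K} (hα : F⟮α⟯ = ⊤) :
    Irreducible (ratTransform g h (minpoly F α)) ↔
      Irreducible (g.map (algebraMap F K) - C α * h.map (algebraMap F K)) := by
  set P := g.map (algebraMap F K) - C α * h.map (algebraMap F K) with hP
  have hPdeg : P.natDegree = g.natDegree := by
    rw [hP, natDegree_sub_eq_left_of_natDegree_lt, natDegree_map]
    exact (natDegree_C_mul_le _ _).trans_lt (by simpa only [natDegree_map])
  have hTdeg := natDegree_ratTransform hgh (minpoly F α)
  rw [(Field.primitive_element_iff_minpoly_natDegree_eq F α).mp hα] at hTdeg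
  have hgpos : 0 < g.natDegree := Nat.zero_lt_of_lt hgh
  obtain ⟨p, hp, hpP⟩ := exists_irreducible_of_natDegree_ne_zero (hPdeg.trans_ne hgpos.ne')
  have : Fact (Irreducible p) := ⟨hp⟩
  have : FiniteDimensional K (AdjoinRoot p) :=
    (AdjoinRoot.powerBasis hp.ne_zero).finite
  have : FiniteDimensional F (AdjoinRoot p) := .trans F K (AdjoinRoot p)
  set x := AdjoinRoot.root p
  have hroot : aeval x g = algebraMap K _ α * aeval x h := by
    have hPx : aeval x P = 0 := aeval_eq_zero_of_dvd_aeval_eq_zero hpP (by simp [x])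
    simpa [hP, sub_eq_zero] using hPx
  have hdvd : minpoly F x ∣ ratTransform g h (minpoly F α) := by
    rw [minpoly.dvd_iff, aeval_ratTransform _ hroot, aeval_algebraMap_apply, minpoly.aeval,
      map_zero, mul_zero]
  have hpdeg : (minpoly K x).natDegree = p.natDegree := by
    rw [AdjoinRoot.minpoly_root hp.ne_zero, natDegree_mul_C (by simp [hp.ne_zero])]
  rw [irreducible_iff_natDegree_eq_of_dvd (minpoly.irreducible (.of_finite F x))
      (ne_zero_of_natDegree_gt (n := 0) (hTdeg ▸ Nat.mul_pos finrank_pos hgpos)) hdvd,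
    irreducible_iff_natDegree_eq_of_dvd hp (ne_zero_of_natDegree_gt (hPdeg ▸ hgpos)) hpP,
    natDegree_minpoly_eq_finrank_mul hco hα (adjoin_root_eq_top p) hroot, hpdeg, hTdeg, hPdeg]
  exact Nat.mul_right_inj finrank_pos.ne'

end RatTransform

section FiniteField

variable {F K : Type*} [Field F] [Field K] [Algebra F K] [Finite K]

theorem natDegree_minpoly_dvd_iff_pow_card_pow_eq (x : K) (n : ℕ) :
    (minpoly F x).natDegree ∣ n ↔ x ^ Nat.card F ^ n = x := by
  have : Finite F := .of_injective _ (algebraMap F K).injective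
  rw [(minpoly.irreducible (.of_finite F x)).natDegree_dvd_iff_dvd_X_pow_card_pow_sub_X,
    minpoly.dvd_iff, map_sub, map_pow, aeval_X, sub_eq_zero]

theorem mem_range_algebraMap_iff_pow_card_eq (x : K) :
    x ∈ (algebraMap F K).range ↔ x ^ Nat.card F = x := by
  simpa [minpoly.natDegree_eq_one_iff] using
    natDegree_minpoly_dvd_iff_pow_card_pow_eq (F := F) x 1

theorem natDegree_minpoly_dvd_finrank_iff_mem (L : IntermediateField F K) (x : K) :
    (minpoly F x).natDegree ∣ finrank F L ↔ x ∈ L := by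
  have : Finite F := .of_injective _ (algebraMap F K).injective
  have hL : x ∈ L ↔ x ∈ (algebraMap L K).range := by simp
  rw [natDegree_minpoly_dvd_iff_pow_card_pow_eq, ← Module.natCard_eq_pow_finrank, hL,
    mem_range_algebraMap_iff_pow_card_eq]

theorem exists_intermediateField_finrank_eq {e : ℕ} (he : e ∣ finrank F K) :
    ∃ L : IntermediateField F K, finrank F L = e := by
  have : Finite F := .of_injective _ (algebraMap F K).injective
  obtain ⟨p, _⟩ := CharP.exists F
  have : Fact p.Prime := ⟨CharP.char_is_prime F p⟩
  have : NeZero e := ⟨ne_zero_of_dvd_ne_zero finrank_pos.ne' he⟩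
  have hrank := FiniteField.finrank_extension F p e
  obtain ⟨φ⟩ := FiniteField.nonempty_algHom_of_finrank_dvd (F := F) (L := K) (hrank ▸ he)
  exact ⟨φ.fieldRange, (AlgEquiv.ofInjectiveField φ).toLinearEquiv.finrank_eq.symm.trans hrank⟩

theorem ncard_setOf_aeval_eq_zero {p : F[X]} (hp : Irreducible p)
    (hdvd : p.natDegree ∣ finrank F K) : {x : K | aeval x p = 0}.ncard = p.natDegree := by
  have : Finite F := .of_injective _ (algebraMap F K).injective
  have : Fact (Irreducible p) := ⟨hp⟩
  have hrank : finrank F (AdjoinRoot p) = p.natDegree :=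
    finrank_quotient_span_eq_natDegree (f := p)
  have : FiniteDimensional F (AdjoinRoot p) := (AdjoinRoot.powerBasis hp.ne_zero).finite
  have : Finite (AdjoinRoot p) := Module.finite_of_finite F
  have hroots : {x : K | aeval x p = 0} = {x | x ∈ p.aroots K} := by
    ext x
    simp [hp.ne_zero]
  calc {x : K | aeval x p = 0}.ncard = Nat.card {x // x ∈ p.aroots K} := by rw [hroots]; rfl
    _ = Nat.card (AdjoinRoot p →ₐ[F] K) :=
        (Nat.card_congr (AdjoinRoot.equiv K F p hp.ne_zero)).symm
    _ = p.natDegree := by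
        rw [FiniteField.natCard_algHom_of_finrank_dvd (hrank ▸ hdvd), hrank]

theorem exists_aeval_eq_zero_iff_natDegree_dvd_finrank {p : F[X]} (hp : Irreducible p) :
    (∃ x : K, aeval x p = 0) ↔ p.natDegree ∣ finrank F K := by
  have : Finite F := .of_injective _ (algebraMap F K).injective
  constructor
  · rintro ⟨x, hx⟩
    have hirr := minpoly.irreducible (.of_finite F x)
    rw [← (irreducible_iff_natDegree_eq_of_dvd hirr hp.ne_zero (minpoly.dvd F x hx)).mp hp]
    exact minpoly.degree_dvd (.of_finite F x)
  · intro hdvd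
    exact Set.nonempty_of_ncard_ne_zero
      ((ncard_setOf_aeval_eq_zero hp hdvd).trans_ne hp.natDegree_pos.ne')

theorem ncard_mul_finrank_eq_ncard_minpoly (P : F[X] → Prop) :
    {f : F[X] | f.Monic ∧ Irreducible f ∧ f.natDegree = finrank F K ∧ P f}.ncard * finrank F K =
      {x : K | F⟮x⟯ = ⊤ ∧ P (minpoly F x)}.ncard := by
  have hpre : {x : K | F⟮x⟯ = ⊤ ∧ P (minpoly F x)} = minpoly F ⁻¹'
      {f : F[X] | f.Monic ∧ Irreducible f ∧ f.natDegree = finrank F K ∧ P f} := by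
    ext x
    have hx : IsIntegral F x := .of_finite F x
    simp only [Set.mem_preimage, Set.mem_ofPred_eq, minpoly.monic hx, minpoly.irreducible hx,
      Field.primitive_element_iff_minpoly_natDegree_eq, true_and]
  rw [hpre, ncard_preimage_of_ncard_fiber_eq]
  rintro f ⟨hmonic, hirr, hdeg, -⟩
  have hfiber : minpoly F ⁻¹' {f} = {x : K | aeval x f = 0} :=
    Set.ext fun x => ⟨fun h => h ▸ minpoly.aeval F x,
      fun h => (minpoly.eq_of_irreducible_of_monic hirr h hmonic).symm⟩
  rw [hfiber, ncard_setOf_aeval_eq_zero hirr hdeg.dvd, hdeg]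

end FiniteField

section CubicMap

/-- The cubic `y ↦ y³ + ay² + by`. With `h = 1 + ax + bx²` and `x = 1/y`, the rational expression
`R = x³/h(x)` is the reciprocal of `cubicMap a b y`, which turns the condition on `f_R` into one
about the values of this map. -/
def cubicMap {R : Type*} [CommRing R] (a b y : R) : R := y ^ 3 + a * y ^ 2 + b * y

theorem map_cubicMap {R S : Type*} [CommRing R] [CommRing S] (φ : R →+* S) (a b y : R) :
    φ (cubicMap a b y) = cubicMap (φ a) (φ b) (φ y) := by
  simp [cubicMap]

theorem irreducible_cubic_toPoly_iff {K : Type*} [Field K] (b c d : K) :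
    Irreducible (Cubic.toPoly ⟨1, b, c, d⟩) ↔ ∀ y, y ^ 3 + b * y ^ 2 + c * y + d ≠ 0 := by
  have hdeg : (Cubic.toPoly ⟨1, b, c, d⟩).natDegree = 3 := Cubic.natDegree_of_a_ne_zero' one_ne_zero
  rw [irreducible_iff_roots_eq_zero_of_degree_le_three (by omega) hdeg.le,
    Multiset.eq_zero_iff_forall_notMem]
  refine forall_congr' fun y => not_congr ?_
  rw [mem_roots (Cubic.monic_of_a_eq_one rfl).ne_zero, IsRoot.def]
  simp [Cubic.toPoly]

theorem irreducible_cubic_toPoly_iff_notMem_range_cubicMap {K : Type*} [Field K] (a b c : K) :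
    Irreducible (Cubic.toPoly ⟨1, a, b, -c⟩) ↔ c ∉ Set.range (cubicMap a b) := by
  simp [irreducible_cubic_toPoly_iff, cubicMap, ← sub_eq_add_neg, sub_eq_zero]

theorem irreducible_X_pow_three_sub_iff {K : Type*} [Field K] (a b : K) {α : K} (hα : α ≠ 0) :
    Irreducible (X ^ 3 - C α * (C b * X ^ 2 + C a * X + 1)) ↔
      α⁻¹ ∉ Set.range (cubicMap a b) := by
  have hpoly : X ^ 3 - C α * (C b * X ^ 2 + C a * X + 1) =
      Cubic.toPoly ⟨1, -(α * b), -(α * a), -α⟩ := by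
    simp only [Cubic.toPoly, map_neg, map_mul, map_one]
    ring
  have hroot (x : K) (hx : x ≠ 0) : x ^ 3 + -(α * b) * x ^ 2 + -(α * a) * x + -α = 0 ↔
      cubicMap a b x⁻¹ = α⁻¹ := by
    rw [cubicMap]
    field_simp
    constructor <;> intro h <;> linear_combination -h
  rw [hpoly, irreducible_cubic_toPoly_iff, ← not_exists_not]
  simp only [not_not, not_iff_not]
  constructor
  · rintro ⟨x, hx⟩
    have hx0 : x ≠ 0 := by
      rintro rfl
      exact hα (by simpa using hx)
    exact ⟨x⁻¹, (hroot x hx0).mp hx⟩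
  · rintro ⟨y, hy⟩
    have hy0 : y ≠ 0 := by
      rintro rfl
      exact inv_ne_zero hα (by simpa [cubicMap] using hy.symm)
    exact ⟨y⁻¹, (hroot _ (inv_ne_zero hy0)).mpr (by rwa [inv_inv])⟩

variable {F K : Type*} [Field F] [Field K] [Algebra F K]

theorem irreducible_ratTransform_X_pow_three_minpoly_iff [FiniteDimensional F K] (a b : F)
    {α : K} (hα : F⟮α⟯ = ⊤) (hα0 : α ≠ 0) :
    Irreducible (ratTransform (X ^ 3) (C b * X ^ 2 + C a * X + 1) (minpoly F α)) ↔
      α⁻¹ ∉ Set.range (cubicMap (algebraMap F K a) (algebraMap F K b)) := by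
  have hco : IsCoprime (X ^ 3) (C b * X ^ 2 + C a * X + 1) :=
    IsCoprime.pow_left ⟨-(C b * X + C a), 1, by ring⟩
  have hdeg : (C b * X ^ 2 + C a * X + 1).natDegree < (X ^ 3 : F[X]).natDegree := by
    rw [natDegree_X_pow, ← map_one C]
    exact Nat.lt_succ_of_le natDegree_quadratic_le
  rw [irreducible_ratTransform_minpoly_iff hco hdeg hα, ← irreducible_X_pow_three_sub_iff _ _ hα0]
  simp

theorem adjoin_simple_inv_eq (x : K) : F⟮x⁻¹⟯ = F⟮x⟯ :=
  le_antisymm (adjoin_simple_le_iff.mpr (inv_mem (mem_adjoin_simple_self F x)))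
    (adjoin_simple_le_iff.mpr (inv_mem_iff.mp (mem_adjoin_simple_self F x⁻¹)))

theorem ncard_irredSet_mul_finrank [Finite K] (hrank : 1 < finrank F K) (a b : F) :
    (IrredSet (X ^ 3) (C b * X ^ 2 + C a * X + 1) (finrank F K)).ncard * finrank F K =
      {c ∈ (Set.range (cubicMap (algebraMap F K a) (algebraMap F K b)))ᶜ |
        (minpoly F c).natDegree = finrank F K}.ncard := by
  have : FiniteDimensional F K := .of_finite
  rw [IrredSet, ncard_mul_finrank_eq_ncard_minpoly, ← Set.ncard_image_of_injective _ inv_injective,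
    Set.image_inv_eq_inv]
  congr 1
  ext c
  simp only [Set.mem_inv, Set.mem_ofPred_eq, adjoin_simple_inv_eq,
    ← Field.primitive_element_iff_minpoly_natDegree_eq]
  rw [and_comm]
  refine and_congr_left fun hc => ?_
  have hc0 : c ≠ 0 := by
    rintro rfl
    rw [adjoin_zero, bot_eq_top_iff_finrank_eq_one] at hc
    omega
  rw [irreducible_ratTransform_X_pow_three_minpoly_iff a b ((adjoin_simple_inv_eq c).trans hc)
    (inv_ne_zero hc0), inv_inv, Set.mem_compl_iff]

theorem algebraMap_mem_range_cubicMap_iff [Finite K] (a b c : F) :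
    algebraMap F K c ∈ Set.range (cubicMap (algebraMap F K a) (algebraMap F K b)) ↔
      c ∈ Set.range (cubicMap a b) ∨ 3 ∣ finrank F K := by
  by_cases hc : c ∈ Set.range (cubicMap a b)
  · obtain ⟨y, rfl⟩ := hc
    simp [map_cubicMap]
  · have hirr := (irreducible_cubic_toPoly_iff_notMem_range_cubicMap a b c).mpr hc
    rw [or_iff_right hc, ← Cubic.natDegree_of_a_ne_zero (P := ⟨1, a, b, -c⟩) one_ne_zero,
      ← exists_aeval_eq_zero_iff_natDegree_dvd_finrank hirr]
    simp [Cubic.toPoly, cubicMap, ← sub_eq_add_neg, sub_eq_zero]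

end CubicMap

section CharThree

variable {L : Type*} [Field L]

theorem ncard_preimage_cubicMap_le_three (a b c : L) : (cubicMap a b ⁻¹' {c}).ncard ≤ 3 := by
  classical
  have hfiber : cubicMap a b ⁻¹' {c} = (Cubic.toPoly ⟨1, a, b, -c⟩).roots.toFinset := by
    ext y
    rw [Finset.mem_coe, Multiset.mem_toFinset, mem_roots Cubic.monic_of_a_eq_one'.ne_zero]
    simp [Cubic.toPoly, cubicMap, ← sub_eq_add_neg, sub_eq_zero]
  calc (cubicMap a b ⁻¹' {c}).ncard ≤ (Cubic.toPoly ⟨1, a, b, -c⟩).roots.card := by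
        rw [hfiber, Set.ncard_coe_finset]
        exact Multiset.toFinset_card_le _
    _ ≤ (Cubic.toPoly ⟨1, a, b, -c⟩).natDegree := card_roots' _
    _ = 3 := Cubic.natDegree_of_a_ne_zero' one_ne_zero

theorem cubicMap_eq_cubicMap_iff {a b x y : L} (hxy : x ≠ y) :
    cubicMap a b x = cubicMap a b y ↔ x ^ 2 + x * y + y ^ 2 + a * (x + y) + b = 0 := by
  have hfactor : cubicMap a b x - cubicMap a b y =
      (x - y) * (x ^ 2 + x * y + y ^ 2 + a * (x + y) + b) := by
    simp only [cubicMap]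
    ring
  rw [← sub_eq_zero, hfactor, mul_eq_zero, or_iff_right (sub_ne_zero.mpr hxy)]

/- Vieta: `-(a + x + y)` is the third point of the fibre of `x` and `y`. -/
theorem cubicMap_neg_add_add_eq {a b x y : L} (hxy : x ≠ y) (h : cubicMap a b x = cubicMap a b y) :
    cubicMap a b (-(a + x + y)) = cubicMap a b x := by
  have := (cubicMap_eq_cubicMap_iff hxy).mp h
  simp only [cubicMap]
  linear_combination (-(a + 2 * x + y)) * this

variable [CharP L 3]

theorem cubicMap_eq_cubicMap_iff_of_charP_three {a b x y : L} (hxy : x ≠ y) :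
    cubicMap a b x = cubicMap a b y ↔ (x - y) ^ 2 + a * (x + y) + b = 0 := by
  have h3 : (3 : L) = 0 := CharP.ofNat_eq_zero L 3
  have hsq : x ^ 2 + x * y + y ^ 2 = (x - y) ^ 2 := by linear_combination x * y * h3
  rw [cubicMap_eq_cubicMap_iff hxy, hsq]

theorem ne_zero_and_eq_div_of_cubicMap_double_root {a b x y : L} (hxy : x ≠ y)
    (h : cubicMap a b x = cubicMap a b y) (hx : -(a + x + y) = x) : a ≠ 0 ∧ x = b / a := by
  have h3 : (3 : L) = 0 := CharP.ofNat_eq_zero L 3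
  have hy : y = x - a := by linear_combination -hx - x * h3
  have ha : a ≠ 0 := by
    rintro rfl
    exact hxy (by rw [hy, sub_zero])
  have := (cubicMap_eq_cubicMap_iff_of_charP_three hxy).mp h
  subst hy
  exact ⟨ha, by rw [eq_div_iff ha]; linear_combination a * x * h3 - this⟩

theorem preimage_cubicMap_div {a : L} (ha : a ≠ 0) (b : L) :
    cubicMap a b ⁻¹' {cubicMap a b (b / a)} = {b / a, b / a - a} := by
  have h3 : (3 : L) = 0 := CharP.ofNat_eq_zero L 3
  ext x
  rcases eq_or_ne x (b / a) with rfl | hx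
  · simp
  have hfactor : (x - b / a) ^ 2 + a * (x + b / a) + b = (x - b / a) * (x - (b / a - a)) := by
    field_simp
    linear_combination a ^ 2 * b * h3
  rw [Set.mem_preimage, Set.mem_singleton_iff, cubicMap_eq_cubicMap_iff_of_charP_three hx, hfactor]
  simp [sub_eq_zero, hx]

theorem ncard_preimage_cubicMap_eq_two_iff {a b c : L} :
    (cubicMap a b ⁻¹' {c}).ncard = 2 ↔ a ≠ 0 ∧ c = cubicMap a b (b / a) := by
  constructor
  · rw [Set.ncard_eq_two]
    rintro ⟨x, y, hxy, hfiber⟩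
    have hx : cubicMap a b x = c := (Set.ext_iff.mp hfiber x).mpr (by simp)
    have hy : cubicMap a b y = c := (Set.ext_iff.mp hfiber y).mpr (by simp)
    have hthird : -(a + x + y) = x ∨ -(a + x + y) = y :=
      (Set.ext_iff.mp hfiber _).mp ((cubicMap_neg_add_add_eq hxy (hx.trans hy.symm)).trans hx)
    rcases hthird with h | h
    · obtain ⟨ha, rfl⟩ := ne_zero_and_eq_div_of_cubicMap_double_root hxy (hx.trans hy.symm) h
      exact ⟨ha, hx.symm⟩
    · obtain ⟨ha, rfl⟩ := ne_zero_and_eq_div_of_cubicMap_double_root hxy.symm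
        (hy.trans hx.symm) (by rwa [add_right_comm])
      exact ⟨ha, hy.symm⟩
  · rintro ⟨ha, rfl⟩
    rw [preimage_cubicMap_div ha, Set.ncard_pair]
    simpa [eq_sub_iff_add_eq] using ha

variable [Finite L]

theorem three_mul_ncard_compl_range_cubicMap_of_ne_zero {a : L} (ha : a ≠ 0) (b : L) :
    3 * (Set.range (cubicMap a b))ᶜ.ncard = Nat.card L := by
  have h3 : (3 : L) = 0 := CharP.ofNat_eq_zero L 3
  have hpairs : {p : L × L | p.1 ≠ p.2 ∧ cubicMap a b p.1 = cubicMap a b p.2}.ncard =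
      ({0}ᶜ : Set L).ncard := by
    refine Set.ncard_congr (fun p _ => p.1 - p.2) (fun p hp => sub_ne_zero.mpr hp.1) ?_ ?_
    · rintro ⟨x, y⟩ ⟨x', y'⟩ ⟨hxy, h⟩ ⟨hxy', h'⟩ (hsub : x - y = x' - y')
      rw [cubicMap_eq_cubicMap_iff_of_charP_three hxy] at h
      rw [cubicMap_eq_cubicMap_iff_of_charP_three hxy', ← hsub] at h'
      have hadd : x + y = x' + y' := mul_left_cancel₀ ha (by linear_combination h - h')
      ext
      · linear_combination (x - x') * h3 - hadd - hsub
      · linear_combination (y - y') * h3 - hadd + hsub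
    · intro t (ht : t ≠ 0)
      set s := -(t ^ 2 + b) / a
      have has : a * s = -(t ^ 2 + b) := mul_div_cancel₀ _ ha
      have hsub : -(s + t) - (t - s) = t := by linear_combination -t * h3
      have hne : -(s + t) ≠ t - s := sub_ne_zero.mp (hsub.trans_ne ht)
      refine ⟨(-(s + t), t - s), ⟨hne, ?_⟩, hsub⟩
      rw [cubicMap_eq_cubicMap_iff_of_charP_three hne, hsub]
      linear_combination has - a * s * h3
  have hdouble : {c | (cubicMap a b ⁻¹' {c}).ncard = 2} = {cubicMap a b (b / a)} := by
    ext c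
    simp [ncard_preimage_cubicMap_eq_two_iff, ha]
  rw [three_mul_ncard_compl_range_of_ncard_fiber_le _ (ncard_preimage_cubicMap_le_three a b),
    hpairs, hdouble, Set.ncard_singleton, ← Set.ncard_singleton (0 : L), add_comm,
    Set.ncard_add_ncard_compl]

theorem three_mul_ncard_compl_range_cubicMap_zero (b : L) :
    3 * (Set.range (cubicMap 0 b))ᶜ.ncard = Nat.card L * {t : L | t ≠ 0 ∧ t ^ 2 = -b}.ncard := by
  have hpairs : {p : L × L | p.1 ≠ p.2 ∧ cubicMap 0 b p.1 = cubicMap 0 b p.2}.ncard =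
      ((Set.univ : Set L) ×ˢ {t : L | t ≠ 0 ∧ t ^ 2 = -b}).ncard := by
    have hmem (x y : L) : x ≠ y ∧ cubicMap 0 b x = cubicMap 0 b y ↔
        x - y ≠ 0 ∧ (x - y) ^ 2 = -b := by
      rw [sub_ne_zero]
      refine and_congr_right fun hxy => ?_
      rw [cubicMap_eq_cubicMap_iff_of_charP_three hxy, zero_mul, add_zero, eq_neg_iff_add_eq_zero]
    refine Set.ncard_congr (fun p _ => (p.1, p.1 - p.2)) ?_ ?_ ?_
    · exact fun p hp => ⟨trivial, (hmem _ _).mp hp⟩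
    · simp +contextual [Prod.ext_iff]
    · exact fun ⟨x, t⟩ ⟨_, ht⟩ => ⟨(x, x - t), (hmem _ _).mpr (by simpa using ht), by simp⟩
  have hdouble : {c | (cubicMap 0 b ⁻¹' {c}).ncard = 2} = ∅ := by
    ext c
    simp [ncard_preimage_cubicMap_eq_two_iff]
  rw [three_mul_ncard_compl_range_of_ncard_fiber_le _ (ncard_preimage_cubicMap_le_three 0 b),
    hpairs, hdouble, Set.ncard_prod, Set.ncard_univ, Set.ncard_empty, add_zero]

end CharThree

theorem gcd_pow_sub_one_two_mul {q : ℕ} (hq : Odd q) (e : ℕ) :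
    (q ^ e - 1).gcd (2 * (q - 1)) = (q - 1) * Nat.gcd 2 e := by
  have hgeom : q ^ e - 1 = (q - 1) * ∑ i ∈ Finset.range e, q ^ i := by
    rw [mul_comm, geom_sum_mul_of_one_le hq.pos]
  have hparity : ∑ i ∈ Finset.range e, q ^ i ≡ e [MOD 2] := by
    rw [← ZMod.natCast_eq_natCast_iff]
    push_cast [ZMod.natCast_eq_one_iff_odd.mpr hq]
    simp
  rw [hgeom, mul_comm 2, Nat.gcd_mul_left, hparity.gcd_eq, Nat.gcd_comm]

section CubicMapSum

variable {F L : Type*} [Field F] [Field L] [Algebra F L] [Finite L]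

theorem ncard_setOf_sq_mem_range (hF : Odd (Nat.card F)) :
    {t : L | t ≠ 0 ∧ t ^ 2 ∈ (algebraMap F L).range}.ncard =
      (Nat.card F - 1) * Nat.gcd 2 (finrank F L) := by
  have : Finite F := .of_injective _ (algebraMap F L).injective
  have himage : {t : L | t ≠ 0 ∧ t ^ 2 ∈ (algebraMap F L).range} =
      Units.val '' ((powMonoidHom (2 * (Nat.card F - 1)) : Lˣ →* Lˣ).ker : Set Lˣ) := by
    ext t
    rcases eq_or_ne t 0 with rfl | ht
    · simp
    lift t to Lˣ using ht.isUnit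
    have hpow : (t : L) ^ 2 ∈ (algebraMap F L).range ↔ (t ^ 2) ^ (Nat.card F - 1) = 1 := by
      rw [mem_range_algebraMap_iff_pow_card_eq, ← mul_pow_sub_one Nat.card_pos.ne',
        mul_eq_left₀ (pow_ne_zero 2 ht)]
      simp only [← Units.val_pow_eq_pow_val, Units.val_eq_one]
    rw [Units.val_injective.mem_set_image, SetLike.mem_coe, MonoidHom.mem_ker, powMonoidHom_apply,
      pow_mul, ← hpow]
    exact and_iff_right ht
  rw [himage, Set.ncard_image_of_injective _ Units.val_injective, ← Nat.card_coe_set_eq,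
    SetLike.coe_sort_coe, IsCyclic.card_powMonoidHom_ker, Nat.card_units,
    Module.natCard_eq_pow_finrank (K := F), gcd_pow_sub_one_two_mul hF]

theorem sum_ncard_sq_eq_neg [Fintype F] :
    ∑ b : F, {t : L | t ≠ 0 ∧ t ^ 2 = -algebraMap F L b}.ncard =
      {t : L | t ≠ 0 ∧ t ^ 2 ∈ (algebraMap F L).range}.ncard := by
  have hunion : {t : L | t ≠ 0 ∧ t ^ 2 ∈ (algebraMap F L).range} =
      ⋃ b : F, {t : L | t ≠ 0 ∧ t ^ 2 = -algebraMap F L b} := by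
    ext t
    simp only [Set.mem_ofPred_eq, Set.mem_iUnion, exists_and_left, RingHom.mem_range, ← map_neg]
    rw [(Equiv.neg F).exists_congr_left]
    simp [eq_comm]
  rw [hunion, Set.ncard_iUnion_of_finite (fun b => Set.toFinite _), finsum_eq_sum_of_fintype]
  intro b c hbc
  rw [Function.onFun, Set.disjoint_left]
  intro t ht ht'
  exact hbc ((algebraMap F L).injective (neg_injective (ht.2.symm.trans ht'.2)))

theorem sum_three_mul_ncard_compl_range_cubicMap [Fintype F] [CharP F 3] :
    ∑ p : F × F, 3 * (Set.range (cubicMap (algebraMap F L p.1) (algebraMap F L p.2)))ᶜ.ncard =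
      (Nat.card F - 1) * (Nat.card F + Nat.gcd 2 (finrank F L)) * Nat.card F ^ finrank F L := by
  classical
  have : CharP L 3 := charP_of_injective_algebraMap (algebraMap F L).injective 3
  have hodd : Odd (Nat.card F) := by
    rw [Nat.card_eq_fintype_card]
    exact Nat.odd_iff.mpr <| FiniteField.odd_card_of_char_ne_two (by rw [ringChar.eq F 3]; decide)
  have hne {a : F} (ha : a ∈ Finset.univ.erase 0) : ∑ b : F,
      3 * (Set.range (cubicMap (algebraMap F L a) (algebraMap F L b)))ᶜ.ncard =
        Nat.card F * Nat.card L := by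
    have ha' : algebraMap F L a ≠ 0 := by simpa using ha
    simp [three_mul_ncard_compl_range_cubicMap_of_ne_zero ha']
  have hzero : ∑ b : F, 3 * (Set.range (cubicMap 0 (algebraMap F L b)))ᶜ.ncard =
      Nat.card L * ((Nat.card F - 1) * Nat.gcd 2 (finrank F L)) := by
    simp only [three_mul_ncard_compl_range_cubicMap_zero]
    rw [← Finset.mul_sum, sum_ncard_sq_eq_neg, ncard_setOf_sq_mem_range hodd]
  rw [Fintype.sum_prod_type, ← Finset.add_sum_erase _ _ (Finset.mem_univ 0),
    Finset.sum_congr rfl (fun a ha => hne ha)]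
  simp only [map_zero]
  rw [hzero, Finset.sum_const,
    Finset.card_erase_of_mem (Finset.mem_univ 0), Finset.card_univ, ← Nat.card_eq_fintype_card,
    smul_eq_mul, Module.natCard_eq_pow_finrank (K := F) (V := L)]
  ring

end CubicMapSum

section IrredSet

variable {F K : Type*} [Field F] [Field K] [Algebra F K] [Finite K]

theorem ncard_compl_range_cubicMap_natDegree_dvd (a b : F) (L : IntermediateField F K) :
    {c ∈ (Set.range (cubicMap (algebraMap F K a) (algebraMap F K b)))ᶜ |
      (minpoly F c).natDegree ∣ finrank F L}.ncard =
        if 3 ∣ finrank L K then 0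
        else (Set.range (cubicMap (algebraMap F L a) (algebraMap F L b)))ᶜ.ncard := by
  have hmem (c : L) : algebraMap L K c ∈
      Set.range (cubicMap (algebraMap F K a) (algebraMap F K b)) ↔
        c ∈ Set.range (cubicMap (algebraMap F L a) (algebraMap F L b)) ∨ 3 ∣ finrank L K := by
    simp only [IsScalarTower.algebraMap_apply F L K, algebraMap_mem_range_cubicMap_iff]
  have himage : {c ∈ (Set.range (cubicMap (algebraMap F K a) (algebraMap F K b)))ᶜ |
      (minpoly F c).natDegree ∣ finrank F L} = algebraMap L K ''
        {c | ¬ (c ∈ Set.range (cubicMap (algebraMap F L a) (algebraMap F L b)) ∨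
          3 ∣ finrank L K)} := by
    simp only [← hmem, natDegree_minpoly_dvd_finrank_iff_mem]
    ext c
    exact ⟨fun ⟨hc, hL⟩ => ⟨⟨c, hL⟩, hc, rfl⟩, by rintro ⟨c, hc, rfl⟩; exact ⟨hc, c.2⟩⟩
  rw [himage, Set.ncard_image_of_injective _ (algebraMap L K).injective]
  split_ifs with h <;> simp [h, Set.compl_def]

theorem sum_three_mul_ncard_compl_range_cubicMap_natDegree_dvd [Fintype F] [CharP F 3] {d : ℕ}
    (hd : d ∣ finrank F K) :
    ∑ p : F × F, 3 *
      {c ∈ (Set.range (cubicMap (algebraMap F K p.1) (algebraMap F K p.2)))ᶜ |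
        (minpoly F c).natDegree ∣ finrank F K / d}.ncard =
      if 3 ∣ d then 0
      else (Nat.card F - 1) * (Nat.card F + Nat.gcd 2 (finrank F K / d)) *
        Nat.card F ^ (finrank F K / d) := by
  obtain ⟨L, hL⟩ := exists_intermediateField_finrank_eq (Nat.div_dvd_of_dvd hd)
  have hLK : finrank L K = d := by
    have := finrank_mul_finrank F L K
    rw [hL] at this
    exact Nat.eq_of_mul_eq_mul_left (Nat.div_pos (Nat.le_of_dvd finrank_pos hd)
      (Nat.pos_of_dvd_of_pos hd finrank_pos)) (this.trans (Nat.div_mul_cancel hd).symm)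
  simp only [← hL, ncard_compl_range_cubicMap_natDegree_dvd, hLK]
  split_ifs
  · simp
  · exact sum_three_mul_ncard_compl_range_cubicMap

theorem three_mul_finrank_mul_sum_ncard_irredSet [Fintype F] [CharP F 3] (hrank : 1 < finrank F K) :
    3 * finrank F K * ∑ p : F × F,
        ((IrredSet (X ^ 3) (C p.2 * X ^ 2 + C p.1 * X + 1) (finrank F K)).ncard : ℤ) =
      ∑ d ∈ (finrank F K).divisors with ¬ 3 ∣ d, ArithmeticFunction.moebius d *
        ((Nat.card F - 1 : ℕ) * (Nat.card F + Nat.gcd 2 (finrank F K / d)) *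
          Nat.card F ^ (finrank F K / d)) := by
  have hfield (p : F × F) : 3 * finrank F K *
      ((IrredSet (X ^ 3) (C p.2 * X ^ 2 + C p.1 * X + 1) (finrank F K)).ncard : ℤ) =
      ∑ d ∈ (finrank F K).divisors, ArithmeticFunction.moebius d * (3 *
        {c ∈ (Set.range (cubicMap (algebraMap F K p.1) (algebraMap F K p.2)))ᶜ |
          (minpoly F c).natDegree ∣ finrank F K / d}.ncard : ℕ) := by
    have hcount := congrArg (Nat.cast : ℕ → ℤ) (ncard_irredSet_mul_finrank hrank p.1 p.2)
    rw [Nat.cast_mul] at hcount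
    rw [mul_assoc, mul_comm (finrank F K : ℤ), hcount,
      ncard_eq_sum_moebius_mul_ncard_dvd _ _ finrank_pos.ne', Finset.mul_sum]
    push_cast
    exact Finset.sum_congr rfl fun d _ => by ring
  rw [Finset.mul_sum, Finset.sum_congr rfl fun p _ => hfield p, Finset.sum_comm, Finset.sum_filter]
  refine Finset.sum_congr rfl fun d hd => ?_
  rw [← Finset.mul_sum, ← Nat.cast_sum,
    sum_three_mul_ncard_compl_range_cubicMap_natDegree_dvd (Nat.dvd_of_mem_divisors hd)]
  split_ifs <;> simp

end IrredSet

theorem cast_gcd_two (e : ℕ) : (Nat.gcd 2 e : ℚ) = (3 + (-1) ^ e) / 2 := by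
  rcases e.even_or_odd with he | he
  · rw [Nat.gcd_eq_left he.two_dvd, he.neg_one_pow]
    norm_num
  · rw [Nat.coprime_two_left.mpr he, he.neg_one_pow]
    norm_num

/-- Theorem 19: for `q` a power of `3` and `m > 1`, the sum of `|𝓘(x³, h, m, q)|` over all
`h(x) = 1 + ax + bx²` (i.e. all `h` of degree at most `2` with `h(0) = 1`) equals
`((q−1)/(3m)) ∑_{d ∣ m, 3 ∤ d} μ(d)(q + (3 + (−1)^{m/d})/2) q^{m/d}`. -/
theorem stmt19 {F : Type*} [Field F] [Fintype F] [CharP F 3] (q : ℕ)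
    (hq : Fintype.card F = q) (m : ℕ) (hm : 1 < m) :
    (∑ p : F × F,
        ((IrredSet (X ^ 3 : F[X]) (C p.2 * X ^ 2 + C p.1 * X + 1) m).ncard : ℚ)) =
      (((q : ℚ) - 1) / (3 * m)) * ∑ d ∈ m.divisors.filter (fun d => ¬ 3 ∣ d),
        ((ArithmeticFunction.moebius d : ℤ) : ℚ) *
          ((q : ℚ) + (3 + (-1 : ℚ) ^ (m / d)) / 2) * (q : ℚ) ^ (m / d) := by
  have : Fact (Nat.Prime 3) := ⟨Nat.prime_three⟩
  have : NeZero m := ⟨by omega⟩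
  let K := FiniteField.Extension F 3 m
  have hrank : finrank F K = m := FiniteField.finrank_extension F 3 m
  have hsum := three_mul_finrank_mul_sum_ncard_irredSet (F := F) (K := K) (hrank.symm ▸ hm)
  rw [hrank, Nat.card_eq_fintype_card, hq] at hsum
  have hq1 : 1 ≤ q := hq ▸ Fintype.card_pos
  have hsum' := congrArg (Int.cast : ℤ → ℚ) hsum
  push_cast [cast_gcd_two, Nat.cast_sub hq1] at hsum'
  rw [div_mul_eq_mul_div, eq_div_iff (by positivity), mul_comm, hsum', Finset.mul_sum]
  exact Finset.sum_congr rfl fun d _ => by ring
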